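/- arXiv:1603.01986 — 8 statements merged into one kernel-verified Lean document; each statement's English description precedes it below -/
import Mathlib

section
/- For every natural number n and every real number s > -1, the Mellin transform of p_n on [0,1] satisfies ∫₀¹ p_n(x)·x^s dx = (-1)^n · (1/2 - s/2)_n / (s+1)_{n+1}, where (a)_m = a(a+1)⋯(a+m-1) denotes the Pochhammer symbol (rising factorial). -/
open MeasureTheory intervalIntegral

/-- The Pochhammer symbol (rising factorial) `(a)_m = a(a+1)⋯(a+m-1)` over `ℝ`. -/
noncomputable def poch (a : ℝ) (m : ℕ) : ℝ := (ascPochhammer ℝ m).eval a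

/-- The polynomial `p_n(x) = ∑_{k=0}^n (n choose k) ((k/2+1)_n / n!) (-1)^{n-k} x^k`. -/
noncomputable def pAlp (n : ℕ) (x : ℝ) : ℝ :=
  ∑ k ∈ Finset.range (n + 1),
    (n.choose k : ℝ) * (poch ((k : ℝ) / 2 + 1) n / (n.factorial : ℝ)) * (-1) ^ (n - k) * x ^ k

open Polynomial in
theorem prod_erase_aux (k n : ℕ) (h : k ≤ n) :
    ∏ j ∈ (Finset.range (n + 1)).erase k, ((j : ℝ) - k) =
      (-1) ^ k * k.factorial * (n - k).factorial := by
  induction n, h using Nat.le_induction with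
  | base =>
    have e : (Finset.range (k + 1)).erase k = Finset.range k := by
      ext x; simp; omega
    rw [e]
    have : ∀ m : ℕ, ∏ j ∈ Finset.range m, ((j : ℝ) - m) = (-1) ^ m * m.factorial := by
      intro m
      induction m with
      | zero => simp
      | succ m ih =>
        rw [Finset.prod_range_succ']
        have : ∀ j ∈ Finset.range m, (((j + 1 : ℕ) : ℝ) - (m + 1 : ℕ)) = (j : ℝ) - m := by
          intro j _; push_cast; ring
        rw [Finset.prod_congr rfl this, ih, Nat.factorial_succ]
        push_cast; ring
    rw [this]; simp
  | succ n h ih =>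
    have e : (Finset.range (n + 1 + 1)).erase k = insert (n + 1) ((Finset.range (n + 1)).erase k) := by
      ext x; simp; omega
    rw [e, Finset.prod_insert (by simp), ih, Nat.succ_sub h, Nat.factorial_succ]
    push_cast [Nat.cast_sub h]; ring

theorem poch_prod (a : ℝ) (m : ℕ) : poch a m = ∏ j ∈ Finset.range m, (a + j) := by
  unfold poch
  induction m with
  | zero => simp
  | succ m ih => rw [ascPochhammer_succ_eval, ih, Finset.prod_range_succ]

theorem int_aux (n : ℕ) (s : ℝ) (hs : -1 < s) :
    ∫ x in (0 : ℝ)..1, pAlp n x * x ^ s =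
      ∑ k ∈ Finset.range (n + 1), (n.choose k : ℝ) * (poch ((k : ℝ) / 2 + 1) n /
        (n.factorial : ℝ)) * (-1) ^ (n - k) * (s + k + 1)⁻¹ := by
  have h1 : ∫ x in (0 : ℝ)..1, pAlp n x * x ^ s = ∫ x in (0 : ℝ)..1,
      ∑ k ∈ Finset.range (n + 1), (n.choose k : ℝ) * (poch ((k : ℝ) / 2 + 1) n /
        (n.factorial : ℝ)) * (-1) ^ (n - k) * x ^ (s + k) := by
    apply intervalIntegral.integral_congr_ae
    refine Filter.Eventually.of_forall fun x hx => ?_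
    rw [Set.uIoc_of_le zero_le_one] at hx
    simp only [pAlp]
    rw [Finset.sum_mul]
    refine Finset.sum_congr rfl fun k _ => ?_
    rw [Real.rpow_add hx.1, Real.rpow_natCast]; ring
  have hk : ∀ k : ℕ, -1 < s + k := fun k => by
    have : (0 : ℝ) ≤ k := k.cast_nonneg
    linarith
  rw [h1, intervalIntegral.integral_finsetSum]
  · refine Finset.sum_congr rfl fun k _ => ?_
    rw [intervalIntegral.integral_const_mul, integral_rpow (Or.inl (hk k)), Real.one_rpow,
      Real.zero_rpow (by linarith [hk k])]
    simp
  · intro k _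
    exact (intervalIntegral.intervalIntegrable_rpow' (hk k)).const_mul _

open Polynomial in
theorem mellin_pAlp (n : ℕ) (s : ℝ) (hs : -1 < s) :
    ∫ x in (0 : ℝ)..1, pAlp n x * x ^ s =
      (-1) ^ n * poch (1 / 2 - s / 2) n / poch (s + 1) (n + 1) := by
  rw [int_aux n s hs]
  have hk : ∀ k : ℕ, 0 < s + 1 + k := fun k => by
    have : (0 : ℝ) ≤ k := k.cast_nonneg
    linarith
  have hpos : 0 < poch (s + 1) (n + 1) := by
    rw [poch_prod]; exact Finset.prod_pos fun k _ => hk k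
  rw [eq_div_iff hpos.ne']
  set P : ℝ[X] := C ((-1) ^ n) * (ascPochhammer ℝ n).comp (C (1 / 2) - C (1 / 2) * X) with hP
  have hPe : ∀ x, P.eval x = (-1) ^ n * poch (1 / 2 - x / 2) n := by
    intro x
    simp only [hP, poch, eval_mul, eval_C, eval_comp, eval_sub, eval_X]
    congr 2; ring
  let v : ℕ → ℝ := fun k => -(k + 1)
  have hdeg : P.degree < (Finset.range (n + 1)).card := by
    rw [Finset.card_range]
    refine lt_of_le_of_lt (degree_le_of_natDegree_le (n := n) ?_) (by exact_mod_cast Nat.lt_succ_self n)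
    refine (natDegree_C_mul_le _ _).trans ?_
    refine natDegree_comp_le.trans ?_
    rw [ascPochhammer_natDegree]
    have : (C (1 / 2) - C (1 / 2) * X : ℝ[X]).natDegree ≤ 1 := by compute_degree
    nlinarith
  have hinj : Set.InjOn v (Finset.range (n + 1)) := by
    intro a _ b _ hab
    simp only [v] at hab
    exact_mod_cast (by linarith : (a : ℝ) = b)
  have key := congrArg (eval s) (Lagrange.eq_interpolate hinj hdeg)
  rw [Lagrange.eval_interpolate_not_at_node _ (fun i _ => by
    simp only [v]; linarith [hk i]), hPe] at key
  rw [key, mul_comm, Lagrange.eval_nodal, poch_prod]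
  congr 1
  · exact Finset.prod_congr rfl fun k _ => by simp only [v]; ring
  · refine Finset.sum_congr rfl fun k hkm => ?_
    have hkn : k ≤ n := by simpa [Nat.lt_succ_iff] using hkm
    have hw : Lagrange.nodalWeight (Finset.range (n + 1)) v k =
        ((-1 : ℝ) ^ k * (k.factorial : ℝ) * ((n - k).factorial : ℝ))⁻¹ := by
      rw [← prod_erase_aux k n hkn, Lagrange.nodalWeight, Finset.prod_inv_distrib]
      congr 1
      exact Finset.prod_congr rfl fun j _ => by simp only [v]; ring
    rw [hw, hPe, Nat.cast_choose ℝ hkn]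
    have e1 : s - v k = s + k + 1 := by simp only [v]; ring
    have e2 : 1 / 2 - v k / 2 = k / 2 + 1 := by simp only [v]; ring
    have e3 : ((-1 : ℝ)) ^ n = (-1) ^ (n - k) * (-1) ^ k := by rw [← pow_add, Nat.sub_add_cancel hkn]
    rw [e1, e2, e3]
    have := (hk k).ne'
    have : s + k + 1 ≠ 0 := by linarith [hk k]
    have f1 := Nat.factorial_ne_zero n
    have f2 := Nat.factorial_ne_zero k
    have f3 := Nat.factorial_ne_zero (n - k)
    field_simp
end

section
/- For every natural number n ≥ 1 and every integer j with 1 ≤ j ≤ n, the odd moment ∫₀¹ p_n(x)·x^{2j-1} dx = 0. In other words, all odd moments of p_n on [0,1] of order at most 2n-1 vanish. -/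
open MeasureTheory intervalIntegral

lemma poch_eq_prod (a : ℝ) (n : ℕ) : poch a n = ∏ i ∈ Finset.range n, (a + i) := by
  unfold poch
  induction n with
  | zero => simp
  | succ n ih => rw [ascPochhammer_succ_eval, Finset.prod_range_succ, ih]

/-- All odd moments of `p_n` on `[0,1]` of order at most `2n-1` vanish. -/
theorem pAlp_odd_moments (n : ℕ) (hn : 1 ≤ n) (j : ℕ) (hj1 : 1 ≤ j) (hj2 : j ≤ n) :
    ∫ x in (0 : ℝ)..1, pAlp n x * x ^ (2 * j - 1) = 0 := by
  set s := (Finset.range n).erase (j - 1) with hs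
  set P : Polynomial ℝ := ∏ i ∈ s,
    (Polynomial.C (1 / 2 : ℝ) * Polynomial.X + Polynomial.C (1 + (i : ℝ))) with hP
  have hmem : j - 1 ∈ Finset.range n := by
    rw [Finset.mem_range]; omega
  have hdeg : P.natDegree < n := by
    have h1 : P.natDegree ≤ ∑ i ∈ s, 1 := by
      refine (Polynomial.natDegree_prod_le _ _).trans (Finset.sum_le_sum fun i _ => ?_)
      exact Polynomial.natDegree_linear_le
    have h2 : s.card = n - 1 := by
      rw [hs, Finset.card_erase_of_mem hmem, Finset.card_range]
    simp only [Finset.sum_const, smul_eq_mul, mul_one, h2] at h1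
    omega
  have hpoch : ∀ k : ℕ, poch ((k : ℝ) / 2 + 1) n = ((k : ℝ) / 2 + j) * P.eval (k : ℝ) := by
    intro k
    rw [poch_eq_prod, ← Finset.mul_prod_erase _ _ hmem, hP, Polynomial.eval_prod]
    congr 1
    · rw [Nat.cast_sub hj1]; push_cast; ring
    · refine Finset.prod_congr rfl fun i _ => ?_
      simp only [Polynomial.eval_add, Polynomial.eval_mul, Polynomial.eval_C, Polynomial.eval_X]
      ring
  have hz := congrFun (Polynomial.fwdDiff_iter_eq_zero_of_degree_lt hdeg) (0 : ℝ)
  rw [fwdDiff_iter_eq_sum_shift] at hz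
  simp only [pAlp, Finset.sum_mul]
  rw [intervalIntegral.integral_finsetSum
    (fun k _ => Continuous.intervalIntegrable (by fun_prop) _ _)]
  have hterm : ∀ k ∈ Finset.range (n + 1),
      ∫ x in (0 : ℝ)..1, (n.choose k : ℝ) * (poch ((k : ℝ) / 2 + 1) n / (n.factorial : ℝ)) *
        (-1) ^ (n - k) * x ^ k * x ^ (2 * j - 1)
      = (1 / (2 * (n.factorial : ℝ))) *
        (((-1 : ℤ) ^ (n - k) * n.choose k) • P.eval (0 + k • (1 : ℝ))) := by
    intro k _
    simp only [mul_assoc, ← pow_add, intervalIntegral.integral_const_mul, integral_pow]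
    rw [hpoch]
    have e : ((k + (2 * j - 1) : ℕ) : ℝ) + 1 = k + 2 * j := by
      have : k + (2 * j - 1) + 1 = k + 2 * j := by omega
      exact_mod_cast this
    have hj : (1 : ℝ) ≤ j := by exact_mod_cast hj1
    have hk : (k : ℝ) + 2 * j ≠ 0 := by positivity
    have hf : (n.factorial : ℝ) ≠ 0 := by positivity
    rw [e]
    simp only [zsmul_eq_mul, nsmul_eq_mul, mul_one, zero_add, one_pow]
    push_cast
    rw [zero_pow (by omega)]
    field_simp
    ring
  rw [Finset.sum_congr rfl hterm, ← Finset.mul_sum, hz]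
  simp
end

section
/- Rodrigues-type formula for p_n: for every natural number n and every real x > 0, p_n(x) = ((-1)^n / (2^n · n!)) · (D*)^n [x^{2n}(1-x)^n](x), where D* is the operator (D*f)(x) = f'(x)/x and (D*)^n denotes its n-fold iteration applied to the function x ↦ x^{2n}(1-x)^n. -/
open MeasureTheory intervalIntegral

/-- The differential operator `D* f = f' / x`. -/
noncomputable def Dstar (f : ℝ → ℝ) : ℝ → ℝ := fun x => deriv f x / x

theorem poch_succ_aux (a : ℝ) (j : ℕ) : poch a (j + 1) = a * poch (a + 1) j := by
  simp [poch, ascPochhammer_succ_left]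

theorem iter_aux (n : ℕ) : ∀ (j m : ℕ), m + j = n → ∀ y : ℝ, 0 < y →
    (Dstar^[j] (fun y : ℝ => y ^ (2 * n) * (1 - y) ^ n)) y =
      ∑ k ∈ Finset.range (n + 1),
        ((n.choose k : ℝ) * (-1) ^ k * (2 ^ j * poch ((k : ℝ) / 2 + m + 1) j)) *
          y ^ (2 * m + k) := by
  intro j
  induction j with
  | zero =>
    intro m hm y hy
    obtain rfl : m = n := by omega
    simp only [Function.iterate_zero, id]
    rw [sub_eq_neg_add, add_pow, Finset.mul_sum]
    refine Finset.sum_congr rfl fun k _ => ?_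
    simp only [poch, ascPochhammer_zero, Polynomial.eval_one, one_pow, neg_pow y k, pow_add]
    ring
  | succ j ih =>
    intro m hm y hy
    rw [Function.iterate_succ_apply']
    have h1 := ih (m + 1) (by omega)
    have h2 : (Dstar^[j] (fun y : ℝ => y ^ (2 * n) * (1 - y) ^ n)) =ᶠ[nhds y]
        fun y => ∑ k ∈ Finset.range (n + 1),
        ((n.choose k : ℝ) * (-1) ^ k * (2 ^ j * poch ((k : ℝ) / 2 + (m + 1 : ℕ) + 1) j)) *
          y ^ (2 * (m + 1) + k) := by
      filter_upwards [lt_mem_nhds hy] with z hz using h1 z hz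
    have h3 := HasDerivAt.fun_sum (u := Finset.range (n + 1)) (x := y) fun k _ =>
      (hasDerivAt_pow (2 * (m + 1) + k) y).const_mul
        ((n.choose k : ℝ) * (-1) ^ k * (2 ^ j * poch ((k : ℝ) / 2 + (m + 1 : ℕ) + 1) j))
    unfold Dstar
    unfold Dstar at h2
    rw [h2.deriv_eq, h3.deriv, Finset.sum_div]
    refine Finset.sum_congr rfl fun k _ => ?_
    rw [poch_succ_aux, div_eq_iff hy.ne',
      show 2 * (m + 1) + k - 1 = 2 * m + k + 1 by omega]
    push_cast
    rw [show (k : ℝ) / 2 + (m + 1) + 1 = (k : ℝ) / 2 + m + 1 + 1 by ring]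
    ring

/-- Rodrigues-type formula: `p_n(x) = ((-1)^n / (2^n n!)) (D*)^n [x^{2n}(1-x)^n](x)` for `x > 0`. -/
theorem rodrigues_pAlp (n : ℕ) (x : ℝ) (hx : 0 < x) :
    pAlp n x = ((-1) ^ n / (2 ^ n * (n.factorial : ℝ))) *
      (Dstar^[n] (fun y : ℝ => y ^ (2 * n) * (1 - y) ^ n)) x := by
  rw [iter_aux n n 0 (by omega) x hx, pAlp, Finset.mul_sum]
  refine Finset.sum_congr rfl fun k hk => ?_
  have hkn : k ≤ n := by simpa [Nat.lt_succ_iff] using hk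
  have hs : (-1 : ℝ) ^ (n - k) = (-1) ^ n * (-1) ^ k := by
    obtain ⟨d, rfl⟩ := Nat.exists_eq_add_of_le hkn
    rw [Nat.add_sub_cancel_left, pow_add]
    have : (-1 : ℝ) ^ k * (-1) ^ k = 1 := by rw [← mul_pow]; simp
    linear_combination (-(-1 : ℝ) ^ d) * this
  have hf : (n.factorial : ℝ) ≠ 0 := by exact_mod_cast n.factorial_ne_zero
  rw [hs]
  simp only [Nat.cast_zero, add_zero, mul_zero, zero_add]
  field_simp
end

section
/- For every natural number n ≥ 2 and every real x, the recurrence (3n-2)·x·q_{n-1}(x) = (2/3)·( n·p_n(x) + (2n-1)·p_{n-1}(x) + (n-1)·p_{n-2}(x) ) holds as an identity of polynomials. -/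
open MeasureTheory intervalIntegral

/-- The polynomial `q_n(x) = ∑_{k=0}^n (n choose k) (((k+1)/2)_n / n!) (-1)^{n-k} x^k`. -/
noncomputable def qAlp (n : ℕ) (x : ℝ) : ℝ :=
  ∑ k ∈ Finset.range (n + 1),
    (n.choose k : ℝ) * (poch (((k : ℝ) + 1) / 2) n / (n.factorial : ℝ)) * (-1) ^ (n - k) * x ^ k

lemma poch_succ' (a : ℝ) (m : ℕ) : poch a (m + 1) = poch a m * (a + m) := by
  simp [poch, ascPochhammer_succ_eval]

lemma poch_succ_left' (a : ℝ) (m : ℕ) : poch a (m + 1) = a * poch (a + 1) m := by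
  simp [poch, ascPochhammer_succ_left, Polynomial.eval_comp]

lemma pAlp_ext (n N : ℕ) (h : n ≤ N) (x : ℝ) : pAlp n x = ∑ k ∈ Finset.range (N + 1),
    (n.choose k : ℝ) * (poch ((k : ℝ) / 2 + 1) n / (n.factorial : ℝ)) * (-1) ^ (n + k) * x ^ k := by
  unfold pAlp
  rw [← Finset.sum_subset (Finset.range_mono (Nat.succ_le_succ h))]
  · refine Finset.sum_congr rfl fun k hk => ?_
    have hk' : k ≤ n := by simp at hk; omega
    congr 2
    obtain ⟨d, rfl⟩ := Nat.exists_eq_add_of_le hk'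
    have : k + d + k = d + 2 * k := by ring
    rw [this, pow_add, pow_mul]
    simp
  · intro k _ hk
    have : n < k := by simp at hk; omega
    simp [Nat.choose_eq_zero_of_lt this]

lemma ch1 (n k : ℕ) : (n.choose (k+1) : ℝ) * (k + 1) = n.choose k * ((n : ℝ) - k) := by
  rcases le_or_gt k n with h | h
  · have := Nat.choose_succ_right_eq n k
    rw [← Nat.cast_sub h]; exact_mod_cast this
  · simp [Nat.choose_eq_zero_of_lt h, Nat.choose_eq_zero_of_lt (Nat.lt_succ_of_lt h)]

lemma ch2 (n k : ℕ) : (n.choose k : ℝ) * (n + 1) = (n+1).choose k * ((n : ℝ) + 1 - k) := by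
  rcases le_or_gt k (n+1) with h | h
  · have := Nat.choose_mul_succ_eq n k
    have h2 : ((n : ℝ) + 1 - k) = ((n + 1 - k : ℕ) : ℝ) := by rw [Nat.cast_sub h]; simp
    rw [h2]; exact_mod_cast this
  · simp [Nat.choose_eq_zero_of_lt h, Nat.choose_eq_zero_of_lt (Nat.lt_of_succ_lt h)]

/-- Recurrence `(3n-2) x q_{n-1}(x) = (2/3)(n p_n(x) + (2n-1) p_{n-1}(x) + (n-1) p_{n-2}(x))`
for `n ≥ 2`. -/
theorem rec_x_qAlp (n : ℕ) (hn : 2 ≤ n) (x : ℝ) :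
    (3 * (n : ℝ) - 2) * x * qAlp (n - 1) x =
      (2 / 3) * ((n : ℝ) * pAlp n x + (2 * (n : ℝ) - 1) * pAlp (n - 1) x
        + ((n : ℝ) - 1) * pAlp (n - 2) x) := by
  obtain ⟨m, rfl⟩ := Nat.exists_eq_add_of_le' hn
  have e1 : m + 2 - 1 = m + 1 := rfl
  have e2 : m + 2 - 2 = m := rfl
  rw [e1, e2, pAlp_ext (m+2) (m+2) le_rfl, pAlp_ext (m+1) (m+2) (by omega),
    pAlp_ext m (m+2) (by omega), Finset.mul_sum, Finset.mul_sum, Finset.mul_sum,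
    ← Finset.sum_add_distrib, ← Finset.sum_add_distrib, Finset.mul_sum,
    Finset.sum_range_succ', qAlp, Finset.mul_sum]
  have hf : (m.factorial : ℝ) ≠ 0 := by positivity
  have hm1 : (m : ℝ) + 1 ≠ 0 := by positivity
  have hm2 : (m : ℝ) + 2 ≠ 0 := by positivity
  have hm2' : (m : ℝ) + 1 + 1 ≠ 0 := by positivity
  rw [← add_zero (Finset.sum _ _)]
  congr 1
  · refine Finset.sum_congr rfl fun j hj => ?_
    have hj' : j ≤ m + 1 := by simp at hj; omega
    have hs : (-1 : ℝ) ^ (m + 1 - j) = (-1) ^ (m + 1 + j) := by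
      obtain ⟨d, hd⟩ := Nat.exists_eq_add_of_le hj'
      rw [hd]
      have : j + d + j = d + 2 * j := by ring
      rw [this, pow_add, pow_mul]
      simp
    have hj1 : (j : ℝ) + 1 ≠ 0 := by positivity
    have c1 := ch1 (m+1) j
    have c2 := ch2 m (j+1)
    have c3 := ch2 (m+1) (j+1)
    have c0 : ((m+2).choose (j+1) : ℝ) = (m+1).choose j * (m+2) / (j+1) := by
      rw [eq_div_iff hj1]
      have := Nat.add_one_mul_choose_eq (m+1) j
      have h : (((m+1+1) * (m+1).choose j : ℕ) : ℝ) = (((m+1+1).choose (j+1) * (j+1) : ℕ) : ℝ) := by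
        rw [this]
      push_cast at h
      linarith
    have c1' : ((m+1).choose (j+1) : ℝ) = (m+1).choose j * (m+1-j) / (j+1) := by
      rw [eq_div_iff hj1, c1]; push_cast; ring
    have c2' : (m.choose (j+1) : ℝ) = (m+1).choose j * (m+1-j) / (j+1) * (m - j) / (m+1) := by
      rw [eq_div_iff hm1, c2, c1']; push_cast; ring
    rw [c0, c1', c2', hs, poch_succ_left', poch_succ' _ (m+1), poch_succ' _ m,
      Nat.factorial_succ (m+1), Nat.factorial_succ m]
    push_cast
    generalize poch (((j:ℝ)+1)/2+1) m = P
    generalize ((m+1).choose j : ℝ) = C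
    have s1 : (-1:ℝ)^(m+1+j) = -(-1)^(m+j) := by ring
    have s2 : (-1:ℝ)^(m+1+(j+1)) = (-1)^(m+j) := by ring
    have s3 : (-1:ℝ)^(m+2+(j+1)) = -(-1)^(m+j) := by ring
    have s4 : (-1:ℝ)^(m+(j+1)) = -(-1)^(m+j) := by ring
    rw [s1, s2, s3, s4, pow_succ x j]
    generalize (-1:ℝ)^(m+j) = S
    generalize x^j = X
    field_simp
    ring
  · rw [poch_succ' _ (m+1), poch_succ' _ m,
      Nat.factorial_succ (m+1), Nat.factorial_succ m]
    push_cast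
    simp only [Nat.choose_zero_right, pow_zero, add_zero]
    have s2 : (-1:ℝ)^(m+1) = -(-1)^m := by ring
    have s3 : (-1:ℝ)^(m+2) = (-1)^m := by ring
    rw [s2, s3]
    generalize (-1:ℝ)^m = S
    generalize poch _ m = P
    field_simp
    push_cast
    ring
end

section
/- For every natural number n ≥ 1 and every real x, one has x·r_{n-1}(x) = (2/3)·( p_{n-1}(x) + p_n(x) ) as an identity of polynomials. -/
open MeasureTheory intervalIntegral

/-- The polynomial `r_n(x) = ∑_{k=0}^n (n choose k) (((k+3)/2)_n / n!) (-1)^{n-k} x^k`. -/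
noncomputable def rAlp (n : ℕ) (x : ℝ) : ℝ :=
  ∑ k ∈ Finset.range (n + 1),
    (n.choose k : ℝ) * (poch (((k : ℝ) + 3) / 2) n / (n.factorial : ℝ)) * (-1) ^ (n - k) * x ^ k

/-- `x r_{n-1}(x) = (2/3)(p_{n-1}(x) + p_n(x))` for `n ≥ 1`. -/
theorem rec_x_rAlp (n : ℕ) (hn : 1 ≤ n) (x : ℝ) :
    x * rAlp (n - 1) x = (2 / 3) * (pAlp (n - 1) x + pAlp n x) := by
  obtain ⟨m, rfl⟩ : ∃ m, n = m + 1 := ⟨n - 1, by omega⟩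
  have hp : ∀ a : ℝ, poch a (m + 1) = poch a m * (a + m) := by
    intro a
    simp [poch, ascPochhammer_succ_eval]
  have hf : ((m + 1).factorial : ℝ) = (m + 1) * (m.factorial : ℝ) := by
    rw [Nat.factorial_succ]; push_cast; ring
  have hf0 : (m.factorial : ℝ) ≠ 0 := by exact_mod_cast m.factorial_ne_zero
  have hm0 : (m : ℝ) + 1 ≠ 0 := by positivity
  have h1 : pAlp m x = ∑ k ∈ Finset.range (m + 1 + 1),
    (m.choose k : ℝ) * (poch ((k : ℝ) / 2 + 1) m / (m.factorial : ℝ)) * (-1) ^ (m - k) * x ^ k := by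
    rw [Finset.sum_range_succ]
    simp [pAlp]
  rw [Nat.add_sub_cancel, h1]
  unfold pAlp rAlp
  rw [← Finset.sum_add_distrib, Finset.sum_range_succ' _ (m + 1), mul_add, Finset.mul_sum, Finset.mul_sum]
  have h0 : ∀ A B : ℝ, B = 0 → A = A + 2 / 3 * B := by intro A B h; rw [h]; ring
  refine Eq.trans (Finset.sum_congr rfl ?_) (h0 _ _ ?_)
  · intro j hj
    have hj' : j ≤ m := by simpa [Nat.lt_succ_iff] using hj
    have ha : ((j + 1 : ℕ) : ℝ) / 2 + 1 = ((j : ℝ) + 3) / 2 := by push_cast; ring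
    rw [ha, hp, hf, Nat.add_sub_add_right]
    have hj0 : (j : ℝ) + 1 ≠ 0 := by positivity
    have c1 : ((m + 1).choose (j + 1) : ℝ) = (m + 1) * (m.choose j : ℝ) / (j + 1) := by
      rw [eq_div_iff hj0]
      exact_mod_cast (Nat.add_one_mul_choose_eq m j).symm
    have c2 : (m.choose (j + 1) : ℝ) = (m.choose j : ℝ) * (m - j) / (j + 1) := by
      rw [eq_div_iff hj0, ← Nat.cast_sub hj']
      exact_mod_cast Nat.choose_succ_right_eq m j
    have c3 : (m.choose (j + 1) : ℝ) * (-1) ^ (m - (j + 1))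
        = -((m.choose (j + 1) : ℝ) * (-1) ^ (m - j)) := by
      rcases hj'.eq_or_lt with h | h
      · subst h; simp
      · have : m - j = (m - (j + 1)) + 1 := by omega
        rw [this, pow_succ]; ring
    have c4 : ∀ P X : ℝ, (m.choose (j + 1) : ℝ) * P * (-1) ^ (m - (j + 1)) * X
        = -((m.choose (j + 1) : ℝ) * (-1) ^ (m - j)) * P * X := by
      intro P X; rw [← c3]; ring
    rw [c4, c1, c2]
    field_simp
    ring
  · rw [hp, hf]
    simp only [Nat.choose_zero_right, Nat.sub_zero, pow_succ]
    field_simp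
    push_cast
    ring
end

section
/- For every natural number n ≥ 1 and every real x, one has (3n+1)·q_n(x) = (n+1)·r_n(x) + n·r_{n-1}(x) as an identity of polynomials. -/
open MeasureTheory intervalIntegral

/-- `(3n+1) q_n(x) = (n+1) r_n(x) + n r_{n-1}(x)` for `n ≥ 1`. -/
theorem rec_qAlp_rAlp (n : ℕ) (hn : 1 ≤ n) (x : ℝ) :
    (3 * (n : ℝ) + 1) * qAlp n x = ((n : ℝ) + 1) * rAlp n x + (n : ℝ) * rAlp (n - 1) x := by
  obtain ⟨m, rfl⟩ : ∃ m, n = m + 1 := ⟨n - 1, by omega⟩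
  have hr : rAlp (m + 1 - 1) x = ∑ k ∈ Finset.range (m + 1 + 1),
      (m.choose k : ℝ) * (poch (((k : ℝ) + 3) / 2) m / (m.factorial : ℝ)) * (-1) ^ (m - k)
        * x ^ k := by
    rw [Finset.sum_range_succ, Nat.add_sub_cancel, rAlp]
    simp
  rw [hr, qAlp, rAlp, Finset.mul_sum, Finset.mul_sum, Finset.mul_sum, ← Finset.sum_add_distrib]
  apply Finset.sum_congr rfl
  intro k hk
  have hk' : k ≤ m + 1 := by
    have := Finset.mem_range.mp hk
    omega
  have h1 : poch (((k : ℝ) + 1) / 2) (m + 1)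
      = ((k : ℝ) + 1) / 2 * poch (((k : ℝ) + 3) / 2) m := by
    unfold poch
    rw [ascPochhammer_succ_left]
    simp only [Polynomial.eval_mul, Polynomial.eval_X, Polynomial.eval_comp, Polynomial.eval_add,
      Polynomial.eval_one]
    congr 2
    ring
  have h2 : poch (((k : ℝ) + 3) / 2) (m + 1)
      = poch (((k : ℝ) + 3) / 2) m * (((k : ℝ) + 3) / 2 + m) := by
    unfold poch
    rw [ascPochhammer_succ_eval]
  have hf : (m.factorial : ℝ) ≠ 0 := by exact_mod_cast m.factorial_ne_zero
  have hm : (m : ℝ) + 1 ≠ 0 := by positivity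
  rw [h1, h2, Nat.factorial_succ]
  generalize poch (((k : ℝ) + 3) / 2) m = A
  push_cast
  rcases Nat.lt_or_ge m k with h | h
  · have : k = m + 1 := by omega
    subst this
    simp only [Nat.choose_self, Nat.choose_succ_self]
    push_cast
    field_simp
    ring
  · have hc : (m.choose k : ℝ) * (m + 1) = ((m + 1).choose k : ℝ) * (m + 1 - k) := by
      have := Nat.choose_mul_succ_eq m k
      have h3 : ((m + 1 - k : ℕ) : ℝ) = m + 1 - k := by
        rw [Nat.cast_sub hk']
        push_cast
        ring
      rw [← h3]
      exact_mod_cast this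
    have hs : (-1 : ℝ) ^ (m + 1 - k) = - (-1) ^ (m - k) := by
      rw [Nat.succ_sub h, pow_succ]
      ring
    have hc' : (m.choose k : ℝ) = ((m + 1).choose k : ℝ) * (m + 1 - k) / (m + 1) := by
      rw [← hc]
      field_simp
    rw [hs, hc']
    field_simp
    ring
end

section
/- Diagonal type I Legendre-Angelesco polynomials: for every natural number n, set c = (1/2)·(3n+2)!/(n!·(2n+1)!) and define Q: ℝ → ℝ by Q(x) = c·p_n(x) for x ∈ [0,1], Q(x) = -c·p_n(-x) for x ∈ [-1,0), and Q(x) = 0 otherwise. Then ∫_{-1}^1 Q(x)·x^k dx = 0 for every integer k with 0 ≤ k ≤ 2n, and ∫_{-1}^1 Q(x)·x^{2n+1} dx = 1. (Thus B_{n+1,n+1} = c·p_n and A_{n+1,n+1}(x) = -B_{n+1,n+1}(-x) are the type I Legendre-Angelesco polynomials for the multi-index (n+1,n+1) with respect to Lebesgue measure on [-1,0] and [0,1].) -/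
open MeasureTheory intervalIntegral

open Polynomial fwdDiff in
lemma aux_inv (n : ℕ) : ∀ a : ℝ, 0 < a →
    ((fwdDiff (1:ℝ))^[n] (fun x : ℝ => x⁻¹)) a
      = (-1) ^ n * n.factorial / (ascPochhammer ℝ (n+1)).eval a := by
  induction n with
  | zero => intro a ha; simp
  | succ n ih =>
    intro a ha
    rw [Function.iterate_succ_apply', fwdDiff, ih a ha, ih (a+1) (by linarith)]
    have h1 : (ascPochhammer ℝ (n+1+1)).eval a = a * (ascPochhammer ℝ (n+1)).eval (a+1) := by
      rw [ascPochhammer_succ_left]; simp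
    have h2 := ascPochhammer_succ_eval (n+1) a
    have p1 : 0 < (ascPochhammer ℝ (n+1)).eval a := ascPochhammer_pos _ _ ha
    have p2 : 0 < (ascPochhammer ℝ (n+1)).eval (a+1) := ascPochhammer_pos _ _ (by linarith)
    have p3 : 0 < (ascPochhammer ℝ (n+1+1)).eval a := ascPochhammer_pos _ _ ha
    have e1 : (ascPochhammer ℝ (n+1)).eval (a+1) = (ascPochhammer ℝ (n+1+1)).eval a / a := by
      rw [h1]; field_simp
    have hn : (0:ℝ) < a + (n+1) := by positivity
    have e2 : (ascPochhammer ℝ (n+1)).eval a = (ascPochhammer ℝ (n+1+1)).eval a / (a + (n+1)) := by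
      rw [h2]; push_cast; field_simp
    rw [e1, e2, Nat.factorial_succ]
    push_cast
    field_simp
    ring

open Polynomial fwdDiff in
lemma aux_sum (n : ℕ) (a : ℝ) (ha : 0 < a) :
    ∑ k ∈ Finset.range (n + 1), (n.choose k : ℝ) * poch ((k : ℝ) / 2 + 1) n * (-1) ^ (n - k)
        * (1 / (k + a))
      = poch (1 - a / 2) n * ((-1) ^ n * n.factorial / poch a (n+1)) := by
  set S : ℝ[X] := (ascPochhammer ℝ n).comp (C (1/2) * X + C (1 - a/2)) with hS
  have hdeg : S.natDegree ≤ n := by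
    rw [hS, natDegree_comp, ascPochhammer_natDegree]
    have := natDegree_linear_le (R := ℝ) (a := 1/2) (b := 1 - a/2)
    nlinarith
  have hev : ∀ x, S.eval x = poch (x / 2 + 1 - a/2) n := by
    intro x
    simp only [hS, eval_comp, poch]
    congr 1
    simp
    ring
  have h0 : S.coeff 0 = poch (1 - a/2) n := by
    rw [coeff_zero_eq_eval_zero, hev]; congr 1; ring
  have hz : (fwdDiff (1:ℝ))^[n] S.divX.eval = 0 := by
    rcases Nat.eq_zero_or_pos n with h | h
    · have : S.divX = 0 := by
        rw [divX_eq_zero_iff]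
        exact eq_C_of_natDegree_le_zero (by omega)
      rw [this]; subst h; ext; simp
    · apply Polynomial.fwdDiff_iter_eq_zero_of_degree_lt
      rw [natDegree_divX_eq_natDegree_tsub_one]; omega
  have hD : ((fwdDiff (1:ℝ))^[n] (S.divX.eval + (S.coeff 0) • (fun x : ℝ => x⁻¹))) a
      = poch (1 - a / 2) n * ((-1) ^ n * n.factorial / poch a (n+1)) := by
    rw [fwdDiff_iter_add, hz, fwdDiff_iter_const_smul, zero_add, Pi.smul_apply, aux_inv n a ha, h0]
    rfl
  rw [← hD, fwdDiff_iter_eq_sum_shift]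
  refine Finset.sum_congr rfl fun k _ => ?_
  have hpos : (0:ℝ) < k + a := by positivity
  have h3 := congrArg (eval (k + a)) (divX_mul_X_add S)
  rw [hev] at h3
  simp only [eval_add, eval_mul, eval_X, eval_C] at h3
  have h4 : ((k:ℝ) + a) / 2 + 1 - a / 2 = k / 2 + 1 := by ring
  rw [h4] at h3
  rw [← h3]
  simp only [Pi.add_apply, Pi.smul_apply, smul_eq_mul, nsmul_eq_mul, mul_one, zsmul_eq_mul]
  rw [add_comm a (k:ℝ)]
  push_cast
  field_simp

lemma pAlp_cont (n : ℕ) : Continuous (pAlp n) := by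
  unfold pAlp; fun_prop

lemma aux_mom (n k : ℕ) : ∫ x in (0:ℝ)..1, pAlp n x * x ^ k
    = poch (1 - ((k:ℝ)+1) / 2) n * ((-1) ^ n / poch ((k:ℝ)+1) (n+1)) := by
  have h := aux_sum n ((k:ℝ)+1) (by positivity)
  have hf : (n.factorial : ℝ) ≠ 0 := by positivity
  have : poch (1 - ((k:ℝ)+1) / 2) n * ((-1) ^ n / poch ((k:ℝ)+1) (n+1))
    = (poch (1 - ((k:ℝ)+1) / 2) n * ((-1) ^ n * n.factorial / poch ((k:ℝ)+1) (n+1)))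
      / n.factorial := by field_simp
  rw [this, ← h, Finset.sum_div]
  simp only [pAlp, Finset.sum_mul]
  rw [intervalIntegral.integral_finsetSum]
  · refine Finset.sum_congr rfl fun j _ => ?_
    simp only [mul_assoc, ← pow_add]
    simp only [intervalIntegral.integral_const_mul, integral_pow]
    push_cast
    simp
    ring
  · intro j _
    apply Continuous.intervalIntegrable
    fun_prop

lemma aux_negn (n : ℕ) : poch (-(n:ℝ)) n = (-1) ^ n * n.factorial := by
  induction n with
  | zero => simp [poch]
  | succ n ih =>
    unfold poch at *
    rw [ascPochhammer_succ_left]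
    have : -((n+1 : ℕ):ℝ) + 1 = -n := by push_cast; ring
    simp only [Polynomial.eval_mul, Polynomial.eval_X, Polynomial.eval_comp, Polynomial.eval_add,
      Polynomial.eval_one, this, ih, Nat.factorial_succ]
    push_cast
    ring

/-- Diagonal type I Legendre-Angelesco polynomials: with
`c = (1/2)(3n+2)!/(n!(2n+1)!)` and `Q = c p_n` on `[0,1]`, `Q(x) = -c p_n(-x)` on `[-1,0)`,
`Q = 0` elsewhere, all moments of order `≤ 2n` vanish and the moment of order `2n+1` is `1`. -/
theorem typeI_diagonal (n : ℕ) (c : ℝ)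
    (hc : c = (1 / 2) * ((3 * n + 2).factorial : ℝ) /
      ((n.factorial : ℝ) * ((2 * n + 1).factorial : ℝ)))
    (Q : ℝ → ℝ)
    (hQ1 : ∀ x ∈ Set.Icc (0 : ℝ) 1, Q x = c * pAlp n x)
    (hQ2 : ∀ x ∈ Set.Ico (-1 : ℝ) 0, Q x = -c * pAlp n (-x))
    (hQ3 : ∀ x, x ∉ Set.Icc (-1 : ℝ) 1 → Q x = 0) :
    (∀ k : ℕ, k ≤ 2 * n → ∫ x in (-1 : ℝ)..1, Q x * x ^ k = 0) ∧
      ∫ x in (-1 : ℝ)..1, Q x * x ^ (2 * n + 1) = 1 := by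
  have hc1 := pAlp_cont n
  have key : ∀ k : ℕ, ∫ x in (-1 : ℝ)..1, Q x * x ^ k
      = c * (1 - (-1) ^ k) * ∫ x in (0:ℝ)..1, pAlp n x * x ^ k := by
    intro k
    have e1 : Set.EqOn (fun x => c * (pAlp n x * x ^ k)) (fun x => Q x * x ^ k)
        (Set.uIoo (0:ℝ) 1) := by
      intro x hx
      rw [Set.uIoo_of_le (by norm_num)] at hx
      simp only [hQ1 x ⟨hx.1.le, hx.2.le⟩]; ring
    have e2 : Set.EqOn (fun x => (-c * (-1)^k) * (pAlp n (-x) * (-x) ^ k)) (fun x => Q x * x ^ k)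
        (Set.uIoo (-1:ℝ) 0) := by
      intro x hx
      rw [Set.uIoo_of_le (by norm_num)] at hx
      simp only [hQ2 x ⟨hx.1.le, hx.2⟩]
      have : (-1:ℝ)^k * (-x)^k = x ^ k := by rw [← mul_pow]; simp
      rw [← this]; ring
    have c1 : Continuous (fun x => c * (pAlp n x * x ^ k)) := by fun_prop
    have c2 : Continuous (fun x => (-c * (-1)^k) * (pAlp n (-x) * (-x) ^ k)) := by fun_prop
    have i1 := (c1.intervalIntegrable (μ := volume) 0 1).congr_uIoo e1
    have i2 := (c2.intervalIntegrable (μ := volume) (-1) 0).congr_uIoo e2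
    rw [← intervalIntegral.integral_add_adjacent_intervals i2 i1,
      ← intervalIntegral.integral_congr_uIoo e1, ← intervalIntegral.integral_congr_uIoo e2,
      intervalIntegral.integral_const_mul, intervalIntegral.integral_const_mul,
      intervalIntegral.integral_comp_neg (fun x => pAlp n x * x ^ k)]
    simp only [neg_zero, neg_neg]
    ring
  constructor
  · intro k hk
    rw [key k]
    rcases Nat.even_or_odd k with h | h
    · simp [h.neg_one_pow]
    · obtain ⟨m, rfl⟩ := h
      rw [aux_mom]
      have : (1 - (((2*m+1 : ℕ):ℝ)+1) / 2) = -(m:ℝ) := by push_cast; ring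
      rw [this]
      have h0 : poch (-(m:ℝ)) n = 0 := ascPochhammer_eval_neg_coe_nat_of_lt (by omega)
      rw [h0]; ring
  · rw [key, aux_mom]
    have : (1 - (((2*n+1 : ℕ):ℝ)+1) / 2) = -(n:ℝ) := by push_cast; ring
    rw [this, aux_negn]
    have h1 := factorial_mul_ascPochhammer ℝ (2*n+1) (n+1)
    have h2 : 2*n+1+(n+1) = 3*n+2 := by ring
    rw [h2] at h1
    change _ * poch _ _ = _ at h1
    have hodd : (-1:ℝ)^(2*n+1) = -1 := by rw [pow_succ, pow_mul]; simp
    have hsq : (-1:ℝ)^n * (-1)^n = 1 := by rw [← mul_pow]; simp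
    have hp : poch (((2*n+1:ℕ):ℝ)+1) (n+1) ≠ 0 := by
      intro h; rw [h, mul_zero] at h1
      exact (Nat.factorial_ne_zero (3*n+2)) (by exact_mod_cast h1.symm)
    rw [hodd, hc, ← h1]
    have f1 : (n.factorial : ℝ) ≠ 0 := by positivity
    have f2 : ((2*n+1).factorial : ℝ) ≠ 0 := by positivity
    generalize poch (((2*n+1:ℕ):ℝ)+1) (n+1) = P at *
    field_simp
    linear_combination 2 * hsq
end

section
/- Characterization of the second-to-last Alpert multiwavelet f_{n−1}: let n ≥ 2 and suppose f: ℝ → ℝ vanishes outside [−1,1], there is a polynomial P of degree at most n−1 with f(x) = P(x) for all x ∈ (0,1), f(−x) = f(x) for all x ∈ (0,1) (even symmetry), ∫_{−1}^1 f(x)·x^i dx = 0 for all integers 0 ≤ i ≤ 2n−3, and ∫_{−1}^1 f(x)² dx = 1. Then there is a real constant d with P = d·q_{n−1} and 2·d²·∫₀¹ q_{n−1}(x)² dx = 1. -/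
open MeasureTheory intervalIntegral Polynomial

theorem alp_int (h Q : ℝ → ℝ) (hQ : Continuous Q)
    (h1 : ∀ x ∈ Set.Ioo (0 : ℝ) 1, h x = Q x)
    (h2 : ∀ x ∈ Set.Ioo (0 : ℝ) 1, h (-x) = Q x) :
    ∫ x in (-1 : ℝ)..1, h x = 2 * ∫ x in (0 : ℝ)..1, Q x := by
  have e1 : Set.EqOn Q h (Set.uIoo 0 1) := by
    intro x hx
    rw [Set.uIoo_of_le zero_le_one] at hx
    exact (h1 x hx).symm
  have e2 : Set.EqOn (fun x => Q (-x)) h (Set.uIoo (-1) 0) := by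
    intro x hx
    rw [Set.uIoo_of_le (by norm_num)] at hx
    have := h2 (-x) ⟨by linarith [hx.2], by linarith [hx.1]⟩
    simp at this
    simp [this]
  have i1 : IntervalIntegrable h volume 0 1 :=
    (hQ.intervalIntegrable 0 1).congr_uIoo e1
  have i2 : IntervalIntegrable h volume (-1) 0 :=
    ((hQ.comp continuous_neg).intervalIntegrable (-1) 0).congr_uIoo e2
  rw [← intervalIntegral.integral_add_adjacent_intervals i2 i1,
    ← intervalIntegral.integral_congr_uIoo e1, ← intervalIntegral.integral_congr_uIoo e2,
    intervalIntegral.integral_comp_neg]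
  simp
  ring

theorem alp_prod1 (k r : ℕ) :
    ∏ l ∈ (Finset.range (k + r + 1)).erase k, ((l : ℝ) - k) =
      (-1) ^ k * (k.factorial : ℝ) * (r.factorial : ℝ) := by
  induction r with
  | zero =>
    have : (Finset.range (k + 0 + 1)).erase k = Finset.range k := by
      ext x; simp; omega
    rw [this, ← Finset.prod_range_reflect]
    have : ∀ j ∈ Finset.range k, (((k - 1 - j : ℕ) : ℝ) - k) = (-1) * ((j + 1 : ℕ) : ℝ) := by
      intro j hj
      have hj' := Finset.mem_range.1 hj
      have : (k : ℝ) = ((k - 1 - j : ℕ) : ℝ) + ((j + 1 : ℕ) : ℝ) := by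
        rw [← Nat.cast_add]; congr 1; omega
      linarith
    rw [Finset.prod_congr rfl this, Finset.prod_mul_distrib, ← Nat.cast_prod,
      Finset.prod_range_add_one_eq_factorial]
    simp
  | succ r ih =>
    have : (Finset.range (k + (r + 1) + 1)).erase k =
        insert (k + r + 1) ((Finset.range (k + r + 1)).erase k) := by
      ext x; simp; omega
    rw [this, Finset.prod_insert (by simp), ih, Nat.factorial_succ]
    push_cast
    ring

theorem alp_prod2 (a : ℝ) (m : ℕ) :
    ∏ j ∈ Finset.range m, (-a - 2 * (j : ℝ)) = (-2) ^ m * poch (a / 2) m := by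
  unfold poch
  induction m with
  | zero => simp
  | succ m ih =>
    rw [Finset.prod_range_succ, ih, ascPochhammer_succ_eval]
    ring

theorem alp_coeff (m : ℕ) (a : ℕ → ℝ)
    (h : ∀ j < m, ∑ k ∈ Finset.range (m + 1), a k / ((k : ℝ) + 2 * j + 1) = 0) :
    ∃ d : ℝ, ∀ k ≤ m, a k = d * ((m.choose k : ℝ) *
      (poch (((k : ℝ) + 1) / 2) m / (m.factorial : ℝ)) * (-1) ^ (m - k)) := by
  set N : Polynomial ℝ := ∑ k ∈ Finset.range (m + 1),
    C (a k) * ∏ l ∈ (Finset.range (m + 1)).erase k, (X - C (-((l : ℝ) + 1))) with hN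
  set D : Polynomial ℝ := ∏ j ∈ Finset.range m, (X - C (2 * (j : ℝ))) with hD
  have hDm : D.Monic := monic_prod_of_monic _ _ fun _ _ => monic_X_sub_C _
  have hDd : D.natDegree = m := by rw [hD, natDegree_finsetProd_X_sub_C_eq_card]; simp
  have hNd : N.natDegree ≤ m := by
    refine natDegree_sum_le_of_forall_le _ _ fun k hk => ?_
    refine (natDegree_C_mul_le _ _).trans ?_
    rw [natDegree_finsetProd_X_sub_C_eq_card, Finset.card_erase_of_mem hk]
    simp
  have hN0 : ∀ j < m, N.eval (2 * (j : ℝ)) = 0 := by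
    intro j hj
    have : N.eval (2 * (j : ℝ)) = (∏ l ∈ Finset.range (m + 1), ((l : ℝ) + 2 * j + 1)) *
        ∑ k ∈ Finset.range (m + 1), a k / ((k : ℝ) + 2 * j + 1) := by
      rw [hN, eval_finsetSum, Finset.mul_sum]
      refine Finset.sum_congr rfl fun k hk => ?_
      rw [← Finset.mul_prod_erase _ _ hk, eval_mul, eval_C, eval_prod]
      have e : ∀ l ∈ (Finset.range (m + 1)).erase k,
          (X - C (-((l : ℝ) + 1))).eval (2 * (j : ℝ)) = (l : ℝ) + 2 * j + 1 := by
        intro l _; simp; ring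
      rw [Finset.prod_congr rfl e]
      have : (k : ℝ) + 2 * j + 1 ≠ 0 := by positivity
      field_simp
    rw [this, h j hj, mul_zero]
  have hND : N = C (N.coeff m) * D := by
    rw [← sub_eq_zero]
    refine eq_zero_of_degree_lt_of_eval_index_eq_zero (v := fun j : ℕ => 2 * (j : ℝ))
      (Finset.range m) ?_ ?_ ?_
    · intro x _ y _ hxy
      simpa using hxy
    · rw [Finset.card_range, degree_lt_iff_coeff_zero]
      intro i hi
      rcases hi.eq_or_lt with rfl | hi
      · have : D.coeff m = 1 := by
          have := hDm.coeff_natDegree; rwa [hDd] at this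
        simp [this]
      · rw [coeff_sub, coeff_C_mul, coeff_eq_zero_of_natDegree_lt (by omega),
          coeff_eq_zero_of_natDegree_lt (p := D) (by omega)]
        simp
    · intro j hj
      have hj' := Finset.mem_range.1 hj
      have : D.eval (2 * (j : ℝ)) = 0 := by
        rw [hD, eval_prod]
        exact Finset.prod_eq_zero hj (by simp)
      simp [hN0 j hj', this]
  refine ⟨N.coeff m * 2 ^ m, fun k hk => ?_⟩
  obtain ⟨r, rfl⟩ := Nat.exists_eq_add_of_le hk
  have hev := congrArg (eval (-((k : ℝ) + 1))) hND
  have e1 : N.eval (-((k : ℝ) + 1)) =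
      a k * ((-1) ^ k * (k.factorial : ℝ) * (r.factorial : ℝ)) := by
    rw [hN, eval_finsetSum, Finset.sum_eq_single k]
    · rw [eval_mul, eval_C, eval_prod, ← alp_prod1]
      congr 1
      refine Finset.prod_congr rfl fun l _ => ?_
      simp; ring
    · intro b hb hbk
      rw [eval_mul, eval_prod, Finset.prod_eq_zero (i := k), mul_zero]
      · simp; omega
      · simp
    · intro hk'; simp at hk'
  have e2 : D.eval (-((k : ℝ) + 1)) = (-2) ^ (k + r) * poch (((k : ℝ) + 1) / 2) (k + r) := by
    rw [hD, eval_prod, ← alp_prod2]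
    refine Finset.prod_congr rfl fun l _ => ?_
    simp
  rw [e1, eval_mul, eval_C, e2] at hev
  rw [Nat.cast_add_choose, Nat.add_sub_cancel_left]
  have hk0 : (k.factorial : ℝ) ≠ 0 := by positivity
  have hr0 : (r.factorial : ℝ) ≠ 0 := by positivity
  have hm0 : ((k + r).factorial : ℝ) ≠ 0 := by positivity
  field_simp
  have hs : ((-1 : ℝ) ^ k) * (-1) ^ k = 1 := by rw [← mul_pow]; simp
  rw [show (-2 : ℝ) = (-1) * 2 by norm_num, mul_pow, pow_add (-1 : ℝ)] at hev
  linear_combination (-1 : ℝ) ^ k * hev + (N.coeff (k + r) * (-1) ^ r * 2 ^ (k + r) * poch (((k : ℝ) + 1) / 2) (k + r) - a k * k.factorial * r.factorial) * hs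

/-- Characterization of the second-to-last Alpert multiwavelet `f_{n-1}`: any function supported
on `[-1,1]` that is a polynomial of degree `≤ n-1` on `(0,1)`, even, with vanishing moments of
order `≤ 2n-3` and unit `L²`-norm, is proportional to `q_{n-1}` on `(0,1)`, with the
normalization `2 d² ∫₀¹ q_{n-1}² = 1`. -/
theorem alpert_second_last (n : ℕ) (hn : 2 ≤ n) (f : ℝ → ℝ) (P : Polynomial ℝ)
    (hPdeg : P.degree ≤ ((n - 1 : ℕ) : WithBot ℕ))
    (hsupp : ∀ x, x ∉ Set.Icc (-1 : ℝ) 1 → f x = 0)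
    (hfP : ∀ x ∈ Set.Ioo (0 : ℝ) 1, f x = P.eval x)
    (heven : ∀ x ∈ Set.Ioo (0 : ℝ) 1, f (-x) = f x)
    (hmom : ∀ i : ℕ, i ≤ 2 * n - 3 → ∫ x in (-1 : ℝ)..1, f x * x ^ i = 0)
    (hnorm : ∫ x in (-1 : ℝ)..1, (f x) ^ 2 = 1) :
    ∃ d : ℝ, (∀ x, P.eval x = d * qAlp (n - 1) x) ∧
      2 * d ^ 2 * ∫ x in (0 : ℝ)..1, (qAlp (n - 1) x) ^ 2 = 1 := by
  obtain ⟨m, rfl⟩ : ∃ m, n = m + 1 := ⟨n - 1, by omega⟩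
  rw [Nat.add_sub_cancel] at *
  have hPd : P.natDegree < m + 1 := Nat.lt_succ_of_le (natDegree_le_of_degree_le hPdeg)
  obtain ⟨d, hd⟩ := alp_coeff m P.coeff (by
    intro j hj
    have h1 := hmom (2 * j) (by omega)
    rw [alp_int _ (fun x => P.eval x * x ^ (2 * j)) (by fun_prop)
      (fun x hx => by simp only [hfP x hx])
      (fun x hx => by simp only [heven x hx, hfP x hx, (even_two_mul j).neg_pow])] at h1
    have h2 : ∫ x in (0 : ℝ)..1, P.eval x * x ^ (2 * j) =
        ∑ k ∈ Finset.range (m + 1), P.coeff k / ((k : ℝ) + 2 * j + 1) := by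
      have : ∀ x : ℝ, P.eval x * x ^ (2 * j) =
          ∑ k ∈ Finset.range (m + 1), P.coeff k * x ^ (k + 2 * j) := by
        intro x
        rw [eval_eq_sum_range' hPd, Finset.sum_mul]
        refine Finset.sum_congr rfl fun k _ => ?_
        ring
      simp_rw [this]
      rw [intervalIntegral.integral_finsetSum
        (fun k _ => Continuous.intervalIntegrable (by fun_prop) _ _)]
      refine Finset.sum_congr rfl fun k _ => ?_
      rw [intervalIntegral.integral_const_mul, integral_pow]
      simp
      rfl
    rw [h2] at h1
    linarith)
  have hP : ∀ x, P.eval x = d * qAlp m x := by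
    intro x
    rw [eval_eq_sum_range' hPd, qAlp, Finset.mul_sum]
    refine Finset.sum_congr rfl fun k hk => ?_
    rw [hd k (by simp at hk; omega)]
    ring
  refine ⟨d, hP, ?_⟩
  rw [alp_int _ (fun x => P.eval x ^ 2) (by fun_prop)
      (fun x hx => by simp only [hfP x hx])
      (fun x hx => by simp only [heven x hx, hfP x hx])] at hnorm
  simp_rw [hP, mul_pow] at hnorm
  rw [intervalIntegral.integral_const_mul] at hnorm
  linarith
end
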